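/- Let 0 < ε* and C > 0, let A ∈ ℝ^{n×z} have full column rank z, and let κ(A) = ‖A†‖‖A‖. Suppose P̄ ∈ ℝ^{n×z} is such that there exist Ẽ ∈ ℝ^{z×n} and F̃ ∈ ℝ^{n×z} with P̄ + F̃ = (Aᵀ + Ẽ)†, ‖Ẽ‖ ≤ Cε*‖A‖, and ‖F̃‖ ≤ Cε*‖P̄‖. If Cε*κ(A) < 1, then ‖P̄‖ ≤ ‖A†‖ / ((1 − Cε*)(1 − Cκ(A)ε*)). -/

import Mathlib

/-!
Write `B = Aᵀ + E` and `q = ‖Q‖` with `Q = B†`. The Penrose equations give `Q = (QB)ᵀQ = Bᵀ(QᵀQ)`.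
Full column rank gives `A†A = 1`, so `A†Q = A†(A + Eᵀ)QᵀQ = QᵀQ + A†EᵀQᵀQ`. Since `‖QᵀQ‖ = q²`,
this yields `q² ≤ ‖A†‖ q + ‖A†‖‖E‖ q²`, hence `q (1 - Cε*κ) ≤ ‖A†‖`; no argument that `B` itself has
full rank is needed. Finally `‖P̄‖ ≤ q + ‖F̃‖ ≤ q + Cε*‖P̄‖`, and `Cε* < 1` because
`1 = ‖A†A‖ ≤ κ` as soon as `z > 0`; for `z = 0` every norm involved vanishes.
-/

open scoped Matrix
noncomputable section

/-- `N` is the Moore–Penrose pseudoinverse of `M` (the four Penrose equations). -/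
def IsMPInv {m n : ℕ} (M : Matrix (Fin m) (Fin n) ℝ) (N : Matrix (Fin n) (Fin m) ℝ) : Prop :=
  M * N * M = M ∧ N * M * N = N ∧ (M * N)ᵀ = M * N ∧ (N * M)ᵀ = N * M

/-- The spectral (ℓ² operator) norm of a matrix. -/
noncomputable def spec {m n : ℕ} (A : Matrix (Fin m) (Fin n) ℝ) : ℝ :=
  ‖LinearMap.toContinuousLinearMap (Matrix.toEuclideanLin A)‖

open scoped Matrix.Norms.L2Operator

lemma spec_eq_norm {m n : ℕ} (M : Matrix (Fin m) (Fin n) ℝ) : spec M = ‖M‖ := rfl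

lemma l2_norm_transpose {m n : ℕ} (M : Matrix (Fin m) (Fin n) ℝ) : ‖Mᵀ‖ = ‖M‖ := by
  rw [← Matrix.conjTranspose_eq_transpose_of_trivial, Matrix.l2_opNorm_conjTranspose]

lemma l2_norm_transpose_mul_self {m n : ℕ} (M : Matrix (Fin m) (Fin n) ℝ) :
    ‖Mᵀ * M‖ = ‖M‖ * ‖M‖ := by
  rw [← Matrix.conjTranspose_eq_transpose_of_trivial, Matrix.l2_opNorm_conjTranspose_mul_self]

lemma mpInv_mul_self_of_rank {n z : ℕ} {A : Matrix (Fin n) (Fin z) ℝ} (hrank : A.rank = z)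
    {N : Matrix (Fin z) (Fin n) ℝ} (hN : IsMPInv A N) : N * A = 1 := by
  have hli : LinearIndependent ℝ A.col := by
    rw [linearIndependent_iff_card_eq_finrank_span, Set.finrank,
      ← Matrix.rank_eq_finrank_span_cols, hrank, Fintype.card_fin]
  have hinj := Matrix.mulVec_injective_iff.mpr hli
  apply Matrix.mulVec_injective
  funext v
  apply hinj
  simp only [Matrix.mulVec_mulVec, ← Matrix.mul_assoc, hN.1, Matrix.mul_one]

/-- Perturbation bound for the pseudoinverse of `Aᵀ + E`, when `A` has the left inverse `L`. -/
lemma norm_mpInv_perturb {n z : ℕ} {A : Matrix (Fin n) (Fin z) ℝ}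
    {L E : Matrix (Fin z) (Fin n) ℝ} {Q : Matrix (Fin n) (Fin z) ℝ}
    (hL : L * A = 1) (hQ : IsMPInv (Aᵀ + E) Q) :
    ‖Q‖ * (1 - ‖L‖ * ‖E‖) ≤ ‖L‖ := by
  obtain ⟨-, h2, -, h4⟩ := hQ
  have hQ' : (A + Eᵀ) * (Qᵀ * Q) = Q := by
    calc (A + Eᵀ) * (Qᵀ * Q) = (Q * (Aᵀ + E))ᵀ * Q := by
          simp [Matrix.transpose_mul, Matrix.mul_assoc]
      _ = Q := by rw [h4, h2]
  have key : Qᵀ * Q = L * Q - L * Eᵀ * (Qᵀ * Q) := by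
    calc Qᵀ * Q = L * ((A + Eᵀ) * (Qᵀ * Q)) - L * Eᵀ * (Qᵀ * Q) := by
          rw [← Matrix.mul_assoc L, Matrix.mul_add, hL, Matrix.add_mul, Matrix.one_mul,
            add_sub_cancel_right]
      _ = _ := by rw [hQ']
  have hn : ‖Q‖ * ‖Q‖ ≤ ‖L‖ * ‖Q‖ + ‖L‖ * ‖E‖ * (‖Q‖ * ‖Q‖) := by
    calc ‖Q‖ * ‖Q‖ = ‖L * Q - L * Eᵀ * (Qᵀ * Q)‖ := by
          rw [← key, l2_norm_transpose_mul_self]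
      _ ≤ ‖L * Q‖ + ‖L * Eᵀ * (Qᵀ * Q)‖ := norm_sub_le _ _
      _ ≤ ‖L‖ * ‖Q‖ + ‖L * Eᵀ‖ * ‖Qᵀ * Q‖ :=
          add_le_add (Matrix.l2_opNorm_mul _ _) (Matrix.l2_opNorm_mul _ _)
      _ ≤ ‖L‖ * ‖Q‖ + ‖L‖ * ‖E‖ * (‖Q‖ * ‖Q‖) := by
          rw [l2_norm_transpose_mul_self]
          gcongr
          exact (Matrix.l2_opNorm_mul _ _).trans_eq (by rw [l2_norm_transpose])
  rcases (norm_nonneg Q).eq_or_lt with h0 | h0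
  · rw [← h0, zero_mul]
    exact norm_nonneg L
  · exact le_of_mul_le_mul_right (by linarith) h0

/-- **Bound on the norm of the computed pseudoinverse.**
If `A` has full column rank, `P̄ + F̃ = (Aᵀ + Ẽ)†` with `‖Ẽ‖ ≤ Cε*‖A‖`, `‖F̃‖ ≤ Cε*‖P̄‖`,
and `Cε*κ(A) < 1`, then `‖P̄‖ ≤ ‖A†‖/((1 − Cε*)(1 − Cκ(A)ε*))`. -/
theorem computed_pseudoinverse_norm_bound {n z : ℕ} (εs C : ℝ) (hεs : 0 < εs) (hC : 0 < C)
    (A : Matrix (Fin n) (Fin z) ℝ) (hrank : A.rank = z)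
    (Adag : Matrix (Fin z) (Fin n) ℝ) (hAdag : IsMPInv A Adag)
    (κ : ℝ) (hκ : κ = spec Adag * spec A)
    (Pbar : Matrix (Fin n) (Fin z) ℝ)
    (Et : Matrix (Fin z) (Fin n) ℝ) (Ft : Matrix (Fin n) (Fin z) ℝ)
    (Q : Matrix (Fin n) (Fin z) ℝ) (hQ : IsMPInv (Aᵀ + Et) Q)
    (hPbar : Pbar + Ft = Q)
    (hEt : spec Et ≤ C * εs * spec A) (hFt : spec Ft ≤ C * εs * spec Pbar)
    (hcond : C * εs * κ < 1) :
    spec Pbar ≤ spec Adag / ((1 - C * εs) * (1 - C * κ * εs)) := by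
  have hL := mpInv_mul_self_of_rank hrank hAdag
  have hq := norm_mpInv_perturb hL hQ
  simp only [spec_eq_norm] at *
  rcases Nat.eq_zero_or_pos z with rfl | hz
  · have hP : Pbar = 0 := Subsingleton.elim _ _
    have hD : Adag = 0 := Subsingleton.elim _ _
    simp [hP, hD]
  · haveI : Nonempty (Fin z) := ⟨⟨0, hz⟩⟩
    have hκ1 : 1 ≤ κ := by
      have h1 : ‖(1 : Matrix (Fin z) (Fin z) ℝ)‖ = 1 := CStarRing.norm_one
      rw [hκ, ← h1, ← hL]
      exact Matrix.l2_opNorm_mul _ _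
    have hCε : 0 < C * εs := mul_pos hC hεs
    have hlt : 0 < 1 - C * εs := by nlinarith
    have hlt' : 0 < 1 - C * κ * εs := by nlinarith
    have hLE : ‖Adag‖ * ‖Et‖ ≤ C * κ * εs := by
      calc ‖Adag‖ * ‖Et‖ ≤ ‖Adag‖ * (C * εs * ‖A‖) := by gcongr
        _ = C * κ * εs := by rw [hκ]; ring
    have hQb : ‖Q‖ * (1 - C * κ * εs) ≤ ‖Adag‖ := by
      refine le_trans ?_ hq
      gcongr
    have hPQ : ‖Pbar‖ * (1 - C * εs) ≤ ‖Q‖ := by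
      have hsub : ‖Pbar‖ ≤ ‖Q‖ + ‖Ft‖ := by
        rw [← add_sub_cancel_right Pbar Ft, hPbar]
        exact norm_sub_le _ _
      linarith
    rw [le_div_iff₀ (mul_pos hlt hlt'), ← mul_assoc]
    exact (mul_le_mul_of_nonneg_right hPQ hlt'.le).trans hQb
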